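/- Let Γ be a finite simplicial graph which is connected and anti-connected, let A_Γ be its right-angled Artin group, and let g be a nontrivial element of A_Γ with star length |g|_* = k. Among all representations of g as a product g = w̄₁⋯w̄_k, where each wᵢ is a star-block word over V(Γ)^{±1} and w̄ᵢ denotes the element of A_Γ it represents, choose one for which the total length |w₁| + ⋯ + |w_k| is minimal. Then the concatenated word w = w₁⋯w_k is in normal form for A_Γ. -/

import Mathlib

/-!
Suppose the concatenated word contains a subword `x^ε u x^{-ε}` with `x` commuting with every
letter of `u`. Deleting the two letters `x^ε` and `x^{-ε}` does not change the group element
(`wordProd_cancel`). The shortened word is a sublist of the concatenation, so it splits into as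
many blocks, each a sublist of the corresponding original block
(`exists_flatten_eq_of_sublist_flatten`) and hence still a star-block. This gives a representation
of `g` by `k` star-blocks of total length smaller by two, contradicting minimality.
-/

/-- The commutation relators of the right-angled Artin group of the graph `Γ`. -/
def raagRels {V : Type*} (Γ : SimpleGraph V) : Set (FreeGroup V) :=
  {r | ∃ v w : V, Γ.Adj v w ∧
    r = FreeGroup.of v * FreeGroup.of w * (FreeGroup.of v)⁻¹ * (FreeGroup.of w)⁻¹}

/-- The right-angled Artin group `A_Γ` of the graph `Γ`. -/
abbrev RAAG {V : Type*} (Γ : SimpleGraph V) := PresentedGroup (raagRels Γ)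

/-- The element of `A_Γ` represented by a word over the alphabet `V(Γ)^{±1}`;
a letter `(v, true)` stands for the generator `v` and `(v, false)` for its inverse. -/
def wordProd {V : Type*} (Γ : SimpleGraph V) (w : List (V × Bool)) : RAAG Γ :=
  (w.map fun p => if p.2 then (PresentedGroup.of p.1 : RAAG Γ)
    else (PresentedGroup.of p.1 : RAAG Γ)⁻¹).prod

/-- The standard generating set `V(Γ)^{±1}` of `A_Γ`. -/
def raagGens {V : Type*} (Γ : SimpleGraph V) : Set (RAAG Γ) :=
  {g | ∃ v : V, g = PresentedGroup.of v ∨ g = (PresentedGroup.of v : RAAG Γ)⁻¹}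

/-- The graph `Γ` decomposes as a nontrivial join: its vertex set splits into two nonempty
parts, every vertex of one part adjacent to every vertex of the other, and the two parts
are not both singletons. -/
def IsNontrivialJoin {V : Type*} (Γ : SimpleGraph V) : Prop :=
  ∃ A B : Set V, A.Nonempty ∧ B.Nonempty ∧ Disjoint A B ∧ A ∪ B = Set.univ ∧
    (∀ a ∈ A, ∀ b ∈ B, Γ.Adj a b) ∧ ¬ ∃ a b, A = {a} ∧ B = {b}

/-- The graph `Γ` is anti-connected: it does not decompose as a nontrivial join. -/
def AntiConnected {V : Type*} (Γ : SimpleGraph V) : Prop := ¬ IsNontrivialJoin Γ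

/-- The star of the vertex `v` in the graph `Γ`: `v` together with its neighbors. -/
def vertexStar {V : Type*} (Γ : SimpleGraph V) (v : V) : Set V :=
  insert v {u | Γ.Adj v u}

/-- The subgroup `⟨St(v)⟩` of `A_Γ` generated by the star of the vertex `v`. -/
def starSubgroup {V : Type*} (Γ : SimpleGraph V) (v : V) : Subgroup (RAAG Γ) :=
  Subgroup.closure (PresentedGroup.of '' vertexStar Γ v)

/-- The star length `|g|_*` of an element `g` of `A_Γ`: the least `l` such that `g` is a
product of `l` elements of `⋃_{v ∈ V(Γ)} ⟨St(v)⟩`. -/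
noncomputable def starLength {V : Type*} (Γ : SimpleGraph V) (g : RAAG Γ) : ℕ :=
  sInf {l : ℕ | ∃ factors : List (RAAG Γ), factors.length = l ∧
    (∀ x ∈ factors, ∃ v : V, x ∈ starSubgroup Γ v) ∧ factors.prod = g}

/-- A word over `V(Γ)^{±1}` is a star-block if all its letters lie in the star of a single
vertex. -/
def IsStarBlock {V : Type*} (Γ : SimpleGraph V) (w : List (V × Bool)) : Prop :=
  ∃ v : V, ∀ p ∈ w, p.1 ∈ vertexStar Γ v

/-- A word over `V(Γ)^{±1}` is in normal form for `A_Γ` if it is freely reduced and contains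
no subword `x^ε u x^{-ε}` where `x` commutes in `A_Γ` with every letter of `u` (the case of an
empty `u` expresses free reducedness). -/
def IsNormalForm {V : Type*} (Γ : SimpleGraph V) (w : List (V × Bool)) : Prop :=
  ¬ ∃ (p u s : List (V × Bool)) (x : V) (ε : Bool),
      w = p ++ (x, ε) :: (u ++ (x, !ε) :: s) ∧
      ∀ q ∈ u, x = q.1 ∨ Γ.Adj x q.1

/-- A sublist of a concatenation is a concatenation of sublists of the pieces. -/
theorem exists_flatten_eq_of_sublist_flatten {α : Type*} (ws : List (List α)) (l : List α)
    (h : l.Sublist ws.flatten) :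
    ∃ ws' : List (List α), List.Forall₂ List.Sublist ws' ws ∧ ws'.flatten = l := by
  induction ws generalizing l with
  | nil => exact ⟨[], .nil, (List.sublist_nil.mp h).symm⟩
  | cons w ws ih =>
    rw [List.flatten_cons, List.sublist_append_iff] at h
    obtain ⟨l₁, l₂, rfl, h₁, h₂⟩ := h
    obtain ⟨ws', h', rfl⟩ := ih l₂ h₂
    exact ⟨l₁ :: ws', .cons h₁ h', rfl⟩

theorem wordProd_append {V : Type*} (Γ : SimpleGraph V) (a b : List (V × Bool)) :
    wordProd Γ (a ++ b) = wordProd Γ a * wordProd Γ b := by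
  simp [wordProd]

theorem wordProd_cons {V : Type*} (Γ : SimpleGraph V) (a : V × Bool) (b : List (V × Bool)) :
    wordProd Γ (a :: b) = wordProd Γ [a] * wordProd Γ b :=
  wordProd_append Γ [a] b

theorem wordProd_singleton_not {V : Type*} (Γ : SimpleGraph V) (x : V) (ε : Bool) :
    wordProd Γ [(x, !ε)] = (wordProd Γ [(x, ε)])⁻¹ := by
  cases ε <;> simp [wordProd]

theorem raag_of_commute {V : Type*} (Γ : SimpleGraph V) {v w : V} (h : Γ.Adj v w) :
    Commute (PresentedGroup.of v : RAAG Γ) (PresentedGroup.of w) := by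
  have h1 : PresentedGroup.mk (raagRels Γ) _ = 1 :=
    PresentedGroup.one_of_mem (rels := raagRels Γ) ⟨v, w, h, rfl⟩
  simp only [map_mul, map_inv] at h1
  exact commutatorElement_eq_one_iff_commute.mp h1

theorem wordProd_commute_letter {V : Type*} (Γ : SimpleGraph V) {x : V} (ε : Bool)
    {q : V × Bool} (h : x = q.1 ∨ Γ.Adj x q.1) :
    Commute (wordProd Γ [(x, ε)]) (wordProd Γ [q]) := by
  obtain ⟨y, δ⟩ := q
  have hc : Commute (PresentedGroup.of x : RAAG Γ) (PresentedGroup.of y) := by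
    rcases h with rfl | h
    · exact Commute.refl _
    · exact raag_of_commute Γ h
  cases ε <;> cases δ <;> simpa [wordProd] using hc

theorem wordProd_commute {V : Type*} (Γ : SimpleGraph V) {x : V} (ε : Bool)
    (u : List (V × Bool)) (h : ∀ q ∈ u, x = q.1 ∨ Γ.Adj x q.1) :
    Commute (wordProd Γ [(x, ε)]) (wordProd Γ u) := by
  induction u with
  | nil => exact Commute.one_right _
  | cons q u ih =>
    rw [wordProd_cons Γ q u]
    exact (wordProd_commute_letter Γ ε (h q (by simp))).mul_right
      (ih fun r hr => h r (by simp [hr]))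

theorem wordProd_cancel {V : Type*} (Γ : SimpleGraph V) {x : V} (ε : Bool)
    (p u s : List (V × Bool)) (h : ∀ q ∈ u, x = q.1 ∨ Γ.Adj x q.1) :
    wordProd Γ (p ++ (x, ε) :: (u ++ (x, !ε) :: s)) = wordProd Γ (p ++ (u ++ s)) := by
  rw [wordProd_append, wordProd_cons, wordProd_append Γ u, wordProd_cons Γ _ s,
    wordProd_singleton_not, wordProd_append Γ p, wordProd_append Γ u s,
    ← mul_assoc (wordProd Γ [(x, ε)]),
    (wordProd_commute Γ ε u h).eq, mul_assoc, mul_inv_cancel_left]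

theorem IsStarBlock.of_sublist {V : Type*} {Γ : SimpleGraph V} {w w' : List (V × Bool)}
    (h : IsStarBlock Γ w) (hs : w'.Sublist w) : IsStarBlock Γ w' :=
  h.imp fun _ hv q hq => hv q (hs.subset hq)

/-- **Minimal star-block decompositions are in normal form.**
Let `Γ` be a finite simplicial graph which is connected and anti-connected, and let `g` be a
nontrivial element of `A_Γ` with star length `k`.  Among all representations of `g` as a
product of `k` star-block words, choose one with minimal total length.  Then the concatenated
word is in normal form for `A_Γ`. -/
theorem normalForm_of_minimal_starBlock_decomposition {V : Type} [Fintype V] [DecidableEq V]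
    (Γ : SimpleGraph V) (hconn : Γ.Connected) (hanti : AntiConnected Γ)
    (g : RAAG Γ) (hg : g ≠ 1) (k : ℕ) (hk : starLength Γ g = k)
    (ws : List (List (V × Bool))) (hlen : ws.length = k)
    (hblocks : ∀ wi ∈ ws, IsStarBlock Γ wi)
    (hprod : wordProd Γ ws.flatten = g)
    (hmin : ∀ ws' : List (List (V × Bool)), ws'.length = k →
      (∀ wi ∈ ws', IsStarBlock Γ wi) → wordProd Γ ws'.flatten = g →
      (ws.map List.length).sum ≤ (ws'.map List.length).sum) :
    IsNormalForm Γ ws.flatten := by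
  rintro ⟨p, u, s, x, ε, hw, hu⟩
  have hsub : (p ++ (u ++ s)).Sublist ws.flatten := by
    rw [hw]
    exact (List.Sublist.refl p).append
      (((List.Sublist.refl u).append (List.sublist_cons_self _ s)).cons _)
  obtain ⟨ws', hF, hfl⟩ := exists_flatten_eq_of_sublist_flatten ws _ hsub
  have hle := hmin ws' (hF.length_eq.trans hlen)
    (fun wi hwi => by
      obtain ⟨i, hi, rfl⟩ := List.mem_iff_getElem.mp hwi
      have hi' : i < ws.length := hF.length_eq ▸ hi
      exact (hblocks _ (List.getElem_mem hi')).of_sublist (hF.get hi hi'))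
    (by rw [hfl, ← wordProd_cancel Γ ε p u s hu, ← hw, hprod])
  rw [← List.length_flatten, ← List.length_flatten, hfl, hw] at hle
  simp only [List.length_append, List.length_cons] at hle
  omega
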